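/- arXiv:2205.08388 — 2 statements merged into one kernel-verified Lean document; each statement's English description precedes it below -/
import Mathlib

section
/- Fix p with 1 < p ≤ ∞ and k > 0. The set A_k of all u ∈ L²(ℝ²;ℝ²) for which there exists ω ∈ L¹(ℝ²) ∩ L^p(ℝ²) with ‖ω‖_{L¹(ℝ²)} ≤ k and ‖ω‖_{L^p(ℝ²)} ≤ k representing the distributional vorticity of u is closed in L²(ℝ²;ℝ²). Consequently, the set of all u ∈ L²(ℝ²;ℝ²) whose distributional vorticity is represented by some ω ∈ L¹(ℝ²) ∩ L^p(ℝ²) is a Borel subset of L²(ℝ²;ℝ²). -/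
open MeasureTheory ENNReal

local notation "E" => EuclideanSpace ℝ (Fin 2)

/-- `ω` represents the distributional vorticity (curl) of the square-integrable
vector field `u` on `ℝ²`:
`∫ ω φ = ∫ (u¹ ∂₂φ - u² ∂₁φ)` for all `φ ∈ C_c^∞(ℝ²)`. -/
def IsDistributionalVorticity (u : Lp E 2 (volume : Measure E)) (ω : E → ℝ) : Prop :=
  ∀ φ : E → ℝ, ContDiff ℝ (⊤ : ℕ∞) φ → HasCompactSupport φ →
    ∫ x : E, ω x * φ x =
      ∫ x : E, (u x 0 * fderiv ℝ φ x (EuclideanSpace.single 1 1) -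
        u x 1 * fderiv ℝ φ x (EuclideanSpace.single 0 1))

open Filter Topology

/-- The midpoint convexity gap of `t ↦ √(1 + t²)` controls the squared distance between the images
under `t ↦ t / √(1 + t²)`. -/
theorem sq_sub_div_sqrt_le (x y : ℝ) :
    (x / √(1 + x ^ 2) - y / √(1 + y ^ 2)) ^ 2 ≤
      8 * ((√(1 + x ^ 2) + √(1 + y ^ 2)) / 2 - √(1 + ((x + y) / 2) ^ 2)) := by
  have ha2 := Real.sq_sqrt (show 0 ≤ 1 + x ^ 2 by positivity)
  have hb2 := Real.sq_sqrt (show 0 ≤ 1 + y ^ 2 by positivity)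
  have hm2 := Real.sq_sqrt (show 0 ≤ 1 + ((x + y) / 2) ^ 2 by positivity)
  have ha : 1 ≤ √(1 + x ^ 2) := Real.one_le_sqrt.2 (by nlinarith [sq_nonneg x])
  have hb : 1 ≤ √(1 + y ^ 2) := Real.one_le_sqrt.2 (by nlinarith [sq_nonneg y])
  have hm : 0 ≤ √(1 + ((x + y) / 2) ^ 2) := Real.sqrt_nonneg _
  generalize √(1 + x ^ 2) = a at *
  generalize √(1 + y ^ 2) = b at *
  generalize √(1 + ((x + y) / 2) ^ 2) = m at *
  have hab : 1 + x * y ≤ a * b := by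
    refine (abs_le_of_sq_le_sq' ?_ (by positivity)).2
    nlinarith [sq_nonneg (x - y)]
  have hmul : ((a + b) / 2 - m) * ((a + b) / 2 + m) = (a * b - 1 - x * y) / 2 := by
    linear_combination (ha2 + hb2) / 4 - hm2
  have hms : m ≤ (a + b) / 2 := by
    by_contra! h
    nlinarith
  have key : a * b - 1 - x * y ≤ 4 * (a * b) * ((a + b) / 2 - m) := by
    have h1 : (a + b) / 2 + m ≤ 2 * (a * b) := by nlinarith
    nlinarith [mul_le_mul_of_nonneg_left h1 (sub_nonneg.2 hms)]
  have hab0 : 0 < a * b := by positivity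
  have hle : (x / a - y / b) ^ 2 ≤ 2 * (a * b - 1 - x * y) / (a * b) := by
    have : (x / a - y / b) ^ 2 + (1 / a - 1 / b) ^ 2 = 2 * (a * b - 1 - x * y) / (a * b) := by
      field_simp
      linear_combination (-b^2) * ha2 + (-a^2) * hb2
    nlinarith [sq_nonneg (1 / a - 1 / b)]
  refine hle.trans ?_
  rw [div_le_iff₀ hab0]
  linarith

theorem abs_div_sqrt_one_add_sq_le_one (t : ℝ) : |t / √(1 + t ^ 2)| ≤ 1 := by
  have h : 0 < √(1 + t ^ 2) := by positivity
  rw [abs_div, abs_of_pos h, div_le_one h]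
  exact Real.abs_le_sqrt (by linarith)

theorem abs_div_sqrt_one_add_sq_le_abs (t : ℝ) : |t / √(1 + t ^ 2)| ≤ |t| := by
  have h : 1 ≤ √(1 + t ^ 2) := Real.one_le_sqrt.2 (by nlinarith [sq_nonneg t])
  rw [abs_div, abs_of_pos (by linarith : 0 < √(1 + t ^ 2))]
  exact div_le_self (abs_nonneg t) h

theorem sq_div_sqrt_one_add_sq (t : ℝ) : (t / √(1 + t ^ 2)) ^ 2 = 1 - 1 / (1 + t ^ 2) := by
  rw [div_pow, Real.sq_sqrt (by positivity)]
  field_simp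
  ring

theorem sqrt_one_add_sq_sub_one_le_abs (t : ℝ) : √(1 + t ^ 2) - 1 ≤ |t| := by
  rw [sub_le_iff_le_add, Real.sqrt_le_left (by positivity)]
  nlinarith [abs_nonneg t, sq_abs t]

/-- A real sequence converges as soon as its image under `t ↦ t / √(1 + t²)` does and it is
frequently bounded. -/
theorem exists_tendsto_of_tendsto_div_sqrt {a : ℕ → ℝ} {l R : ℝ}
    (ha : Tendsto (fun n => a n / √(1 + a n ^ 2)) atTop (𝓝 l))
    (hR : ∃ᶠ n in atTop, |a n| ≤ R) : ∃ c, Tendsto a atTop (𝓝 c) := by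
  have hl : l ^ 2 ≤ 1 - 1 / (1 + R ^ 2) := by
    refine le_of_tendsto_of_frequently (ha.pow 2) (hR.mono fun n hn => ?_)
    rw [sq_div_sqrt_one_add_sq]
    have : a n ^ 2 ≤ R ^ 2 := sq_le_sq.2 (hn.trans (le_abs_self R))
    gcongr
  have hl' : √(1 - l ^ 2) ≠ 0 := by
    have : 0 < 1 / (1 + R ^ 2) := by positivity
    exact (Real.sqrt_pos.2 (by linarith)).ne'
  refine ⟨l / √(1 - l ^ 2), ?_⟩
  have h := ha.div ((tendsto_const_nhds (x := (1 : ℝ)).sub (ha.pow 2)).sqrt) hl'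
  refine h.congr fun n => ?_
  rw [Pi.div_apply, sq_div_sqrt_one_add_sq, _root_.sub_sub_cancel,
    Real.sqrt_div zero_le_one, Real.sqrt_one]
  have : √(1 + a n ^ 2) ≠ 0 := by positivity
  field_simp

section
variable {α : Type*} [MeasurableSpace α] {μ : Measure α}

theorem MeasureTheory.Integrable.sqrt_one_add_sq_sub_one {f : α → ℝ} (hf : Integrable f μ) :
    Integrable (fun x => √(1 + f x ^ 2) - 1) μ := by
  have hc : Continuous fun t : ℝ => √(1 + t ^ 2) - 1 := by fun_prop
  refine hf.mono (hc.comp_aestronglyMeasurable hf.1) (ae_of_all _ fun x => ?_)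
  have h1 : 1 ≤ √(1 + f x ^ 2) := Real.one_le_sqrt.2 (by nlinarith [sq_nonneg (f x)])
  rw [Real.norm_of_nonneg (by linarith)]
  exact sqrt_one_add_sq_sub_one_le_abs _

theorem MeasureTheory.Integrable.memLp_two_div_sqrt {f : α → ℝ} (hf : Integrable f μ) :
    MemLp (fun x => f x / √(1 + f x ^ 2)) 2 μ := by
  have hc : Continuous fun t : ℝ => t / √(1 + t ^ 2) :=
    continuous_id.div (by fun_prop) fun t => by positivity
  have hm := hc.comp_aestronglyMeasurable hf.1
  refine (memLp_two_iff_integrable_sq hm).2 (hf.mono (hm.pow 2) (ae_of_all _ fun x => ?_))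
  rw [Real.norm_eq_abs, Real.norm_eq_abs, abs_pow]
  have h1 := abs_div_sqrt_one_add_sq_le_one (f x)
  have h2 := abs_div_sqrt_one_add_sq_le_abs (f x)
  have h3 := abs_nonneg (f x / √(1 + f x ^ 2))
  nlinarith

theorem MeasureTheory.ae_exists_frequently_abs_le {w : ℕ → α → ℝ} {K : ℝ≥0∞} (hK : K ≠ ∞)
    (hw : ∀ n, AEStronglyMeasurable (w n) μ) (hwK : ∀ n, eLpNorm (w n) 1 μ ≤ K) :
    ∀ᵐ x ∂μ, ∃ R : ℝ, ∃ᶠ n in atTop, |w n x| ≤ R := by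
  have hbdd := ae_bdd_liminf_atTop_of_eLpNorm_bdd (μ := μ) (R := K.toNNReal) one_ne_zero
    (fun n => (hw n).stronglyMeasurable_mk.measurable) fun n => by
      rw [ENNReal.coe_toNNReal hK, ← eLpNorm_congr_ae (hw n).ae_eq_mk]
      exact hwK n
  filter_upwards [hbdd, ae_all_iff.2 fun n => (hw n).ae_eq_mk] with x hx hmk
  simp only [← hmk] at hx
  obtain ⟨r, hr, hr'⟩ := exists_between hx
  refine ⟨r.toReal, (frequently_lt_of_liminf_lt (by isBoundedDefault) hr).mono fun n hn => ?_⟩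
  rw [← Real.norm_eq_abs, ← toReal_enorm]
  exact ENNReal.toReal_mono hr'.ne hn.le

/-- A decreasing sequence of nonempty, midpoint-convex sets of functions, bounded in `L¹`, admits
a selection that converges almost everywhere. -/
theorem MeasureTheory.exists_selection_tendsto_ae {S : ℕ → Set (α → ℝ)} (hanti : Antitone S)
    (hne : ∀ n, (S n).Nonempty) (hSi : ∀ n, ∀ f ∈ S n, Integrable f μ)
    (hmid : ∀ n, ∀ f ∈ S n, ∀ g ∈ S n, (fun x => (f x + g x) / 2) ∈ S n)
    {K : ℝ≥0∞} (hK : K ≠ ∞) (hSK : ∀ n, ∀ f ∈ S n, eLpNorm f 1 μ ≤ K) :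
    ∃ (w : ℕ → α → ℝ) (g : α → ℝ), (∀ n, w n ∈ S n) ∧
      ∀ᵐ x ∂μ, Tendsto (fun n => w n x) atTop (𝓝 (g x)) := by
  set Φ : (α → ℝ) → ℝ := fun f => ∫ x, (√(1 + f x ^ 2) - 1) ∂μ with hΦ
  have hΦ0 : ∀ f, 0 ≤ Φ f := fun f => integral_nonneg fun x => by
    have : 1 ≤ √(1 + f x ^ 2) := Real.one_le_sqrt.2 (by nlinarith [sq_nonneg (f x)])
    simpa using this
  have hΦK : ∀ n, ∀ f ∈ S n, Φ f ≤ K.toReal := fun n f hf => by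
    have h1 : Φ f ≤ ∫ x, ‖f x‖ ∂μ := integral_mono (hSi n f hf).sqrt_one_add_sq_sub_one
      (hSi n f hf).norm fun x => sqrt_one_add_sq_sub_one_le_abs _
    refine h1.trans ?_
    rw [integral_norm_eq_lintegral_enorm (hSi n f hf).1, ← eLpNorm_one_eq_lintegral_enorm]
    exact ENNReal.toReal_mono hK (hSK n f hf)
  set I : ℕ → ℝ := fun n => sInf (Φ '' S n)
  have hbdd : ∀ n, BddBelow (Φ '' S n) := fun n => ⟨0, by rintro _ ⟨f, -, rfl⟩; exact hΦ0 f⟩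
  have hIle : ∀ n, ∀ f ∈ S n, I n ≤ Φ f := fun n f hf => csInf_le (hbdd n) ⟨f, hf, rfl⟩
  have hImono : Monotone I := fun m n hmn =>
    csInf_le_csInf (hbdd m) ((hne n).image Φ) (Set.image_mono (hanti hmn))
  have hIbdd : BddAbove (Set.range I) := ⟨K.toReal, by
    rintro _ ⟨n, rfl⟩
    obtain ⟨f, hf⟩ := hne n
    exact (hIle n f hf).trans (hΦK n f hf)⟩
  have hex : ∀ n : ℕ, ∃ f ∈ S n, Φ f < I n + 1 / ((n : ℝ) + 1) := fun n => by
    obtain ⟨_, ⟨f, hf, rfl⟩, h⟩ := exists_lt_of_csInf_lt ((hne n).image Φ)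
      (show sInf (Φ '' S n) < I n + 1 / ((n : ℝ) + 1) from lt_add_of_pos_right _ (by positivity))
    exact ⟨f, hf, h⟩
  choose w hwS hwΦ using hex
  have hwi : ∀ n, Integrable (w n) μ := fun n => hSi n _ (hwS n)
  set v : ℕ → Lp ℝ 2 μ := fun n => (hwi n).memLp_two_div_sqrt.toLp _ with hv
  have hgap : ∀ n m N : ℕ, N ≤ n → N ≤ m →
      dist (v n) (v m) ≤ √(8 * ((⨆ i, I i) - I N + 1 / ((N : ℝ) + 1))) := by
    intro n m N hn hm
    apply Real.le_sqrt_of_sq_le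
    have hmem := hmid N _ (hanti hn (hwS n)) _ (hanti hm (hwS m))
    have hdist : dist (v n) (v m) ^ 2 =
        ∫ x, (w n x / √(1 + w n x ^ 2) - w m x / √(1 + w m x ^ 2)) ^ 2 ∂μ := by
      rw [dist_eq_norm, ← real_inner_self_eq_norm_sq, hv, ← MemLp.toLp_sub, L2.inner_def]
      refine integral_congr_ae ?_
      filter_upwards [((hwi n).memLp_two_div_sqrt.sub (hwi m).memLp_two_div_sqrt).coeFn_toLp]
        with x hx
      rw [hx]
      simp [pow_two]
    have i1 := (hwi n).sqrt_one_add_sq_sub_one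
    have i2 := (hwi m).sqrt_one_add_sq_sub_one
    have i3 := (hSi N _ hmem).sqrt_one_add_sq_sub_one
    have hle : ∫ x, (w n x / √(1 + w n x ^ 2) - w m x / √(1 + w m x ^ 2)) ^ 2 ∂μ ≤
        8 * ((Φ (w n) + Φ (w m)) / 2 - Φ fun x => (w n x + w m x) / 2) := by
      rw [hΦ]
      dsimp only
      have i12 : Integrable
          (fun x => (√(1 + w n x ^ 2) - 1 + (√(1 + w m x ^ 2) - 1)) / 2) μ :=
        (i1.add i2).div_const 2
      rw [← integral_add i1 i2, ← integral_div, ← integral_sub i12 i3, ← integral_const_mul]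
      refine integral_mono
        ((hwi n).memLp_two_div_sqrt.sub (hwi m).memLp_two_div_sqrt).integrable_sq
        ((i12.sub i3).const_mul 8) fun x => ?_
      refine (sq_sub_div_sqrt_le (w n x) (w m x)).trans_eq ?_
      ring
    rw [hdist]
    refine hle.trans ?_
    have e1 := (hwΦ n).le
    have e2 := (hwΦ m).le
    have e3 := hIle N _ hmem
    have e4 := le_ciSup hIbdd n
    have e5 := le_ciSup hIbdd m
    have e6 : 1 / ((n : ℝ) + 1) ≤ 1 / ((N : ℝ) + 1) := by gcongr
    have e7 : 1 / ((m : ℝ) + 1) ≤ 1 / ((N : ℝ) + 1) := by gcongr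
    linarith
  have hlim : Tendsto (fun N : ℕ => √(8 * ((⨆ i, I i) - I N + 1 / ((N : ℝ) + 1)))) atTop (𝓝 0) := by
    have h := (((tendsto_const_nhds (x := ⨆ i, I i)).sub (tendsto_atTop_ciSup hImono hIbdd)).add
      tendsto_one_div_add_atTop_nhds_zero_nat).const_mul 8 |>.sqrt
    simpa using h
  obtain ⟨V, hV⟩ := cauchySeq_tendsto_of_complete (cauchySeq_of_le_tendsto_0 _ hgap hlim)
  obtain ⟨ns, hns, hae⟩ := (tendstoInMeasure_of_tendsto_Lp hV).exists_seq_tendsto_ae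
  have hvw : ∀ᵐ x ∂μ, ∀ n, v n x = w n x / √(1 + w n x ^ 2) :=
    ae_all_iff.2 fun n => (hwi n).memLp_two_div_sqrt.coeFn_toLp
  have hfreq := ae_exists_frequently_abs_le hK (fun n => (hwi (ns n)).1)
    fun n => hSK _ _ (hwS (ns n))
  have hconv : ∀ᵐ x ∂μ, ∃ c, Tendsto (fun n => w (ns n) x) atTop (𝓝 c) := by
    filter_upwards [hae, hvw, hfreq] with x h1 h2 ⟨R, hR⟩
    refine exists_tendsto_of_tendsto_div_sqrt (l := V x) ?_ hR
    simpa only [h2] using h1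
  refine ⟨fun n => w (ns n), fun x => limUnder atTop fun n => w (ns n) x,
    fun n => hanti (hns.id_le n) (hwS _), ?_⟩
  filter_upwards [hconv] with x hx
  exact tendsto_nhds_limUnder hx

theorem MeasureTheory.unifIntegrable_one_of_eLpNorm_le {ι : Type*} {f : ι → α → ℝ} {p K : ℝ≥0∞}
    (hp : 1 < p) (hK : K ≠ ∞) (hf : ∀ i, AEStronglyMeasurable (f i) μ)
    (hfK : ∀ i, eLpNorm (f i) p μ ≤ K) : UnifIntegrable f 1 μ := by
  intro ε hε
  have hr : 0 < 1 - 1 / p.toReal := by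
    rcases eq_or_ne p ∞ with rfl | hp'
    · simp
    · have : 1 < p.toReal := by simpa using ENNReal.toReal_strict_mono hp' hp
      rw [sub_pos, div_lt_one (by linarith)]
      exact this
  have hlim : Tendsto (fun δ : ℝ => K * ENNReal.ofReal δ ^ (1 - 1 / p.toReal)) (𝓝 0) (𝓝 0) := by
    have h : Tendsto (fun δ : ℝ => ENNReal.ofReal δ ^ (1 - 1 / p.toReal)) (𝓝 0) (𝓝 0) := by
      have := ((ENNReal.continuous_rpow_const (y := 1 - 1 / p.toReal)).comp
        ENNReal.continuous_ofReal).tendsto 0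
      simpa only [Function.comp_def, ENNReal.ofReal_zero, ENNReal.zero_rpow_of_pos hr] using this
    simpa using ENNReal.Tendsto.const_mul h (Or.inr hK)
  have hev : ∀ᶠ δ : ℝ in 𝓝[>] 0,
      K * ENNReal.ofReal δ ^ (1 - 1 / p.toReal) ≤ ENNReal.ofReal ε :=
    nhdsWithin_le_nhds (hlim.eventually (ge_mem_nhds (by simpa using hε)))
  obtain ⟨δ, hδ, hδ0⟩ := (hev.and self_mem_nhdsWithin).exists
  refine ⟨δ, hδ0, fun i s hs hsδ => ?_⟩
  rw [eLpNorm_indicator_eq_eLpNorm_restrict hs]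
  refine (eLpNorm_le_eLpNorm_mul_rpow_measure_univ hp.le (hf i).restrict).trans ?_
  rw [Measure.restrict_apply_univ, ENNReal.toReal_one, div_one]
  refine le_trans ?_ hδ
  gcongr
  exact (eLpNorm_mono_measure _ Measure.restrict_le_self).trans (hfK i)

/-- Almost everywhere convergence together with an `L^p` bound, `p > 1`, gives convergence against
bounded functions that vanish outside a set of finite measure. -/
theorem MeasureTheory.tendsto_integral_mul_of_tendsto_ae {w : ℕ → α → ℝ} {g φ : α → ℝ}
    {p K : ℝ≥0∞} {C : ℝ} (hp : 1 < p) (hK : K ≠ ∞) (hw : ∀ n, Integrable (w n) μ)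
    (hg : Integrable g μ) (hwK : ∀ n, eLpNorm (w n) p μ ≤ K)
    (hwg : ∀ᵐ x ∂μ, Tendsto (fun n => w n x) atTop (𝓝 (g x)))
    (hφ : AEStronglyMeasurable φ μ) (hC : ∀ x, ‖φ x‖ ≤ C) {s : Set α} (hs : μ s ≠ ∞)
    (hφs : ∀ x ∉ s, φ x = 0) :
    Tendsto (fun n => ∫ x, w n x * φ x ∂μ) atTop (𝓝 (∫ x, g x * φ x ∂μ)) := by
  have hbound : ∀ n, eLpNorm (fun x => w n x * φ x) p μ ≤ ENNReal.ofReal C * K := fun n => by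
    refine (eLpNorm_le_mul_eLpNorm_of_ae_le_mul (ae_of_all _ fun x => ?_) p).trans
      (mul_le_mul_right (hwK n) _)
    rw [norm_mul, mul_comm]
    exact mul_le_mul_of_nonneg_right (hC x) (norm_nonneg _)
  have hwφ : ∀ n, Integrable (fun x => w n x * φ x) μ :=
    fun n => (hw n).mul_bdd hφ (ae_of_all _ hC)
  have hgφ : Integrable (fun x => g x * φ x) μ := hg.mul_bdd hφ (ae_of_all _ hC)
  refine tendsto_integral_of_L1' _ hgφ.1 (Eventually.of_forall hwφ) ?_
  refine tendsto_Lp_of_tendsto_ae le_rfl one_ne_top (fun n => (hwφ n).1)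
    (memLp_one_iff_integrable.2 hgφ)
    (unifIntegrable_one_of_eLpNorm_le hp (by finiteness) (fun n => (hwφ n).1) hbound) ?_ ?_
  · refine fun ε _ => ⟨s, hs, fun n => ?_⟩
    have : sᶜ.indicator (fun x => w n x * φ x) = 0 := by
      ext x
      by_cases hx : x ∈ s <;> simp [hx, hφs]
    simp [this]
  · filter_upwards [hwg] with x hx
    exact hx.mul_const _

end

/-- Testing the curl of `u` against `φ` is taking the inner product with the rotated gradient of
`φ`. -/
theorem exists_inner_eq_integral_curl {φ : E → ℝ} (hφ : ContDiff ℝ (⊤ : ℕ∞) φ)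
    (hc : HasCompactSupport φ) :
    ∃ ψ : Lp E 2 (volume : Measure E), ∀ u : Lp E 2 (volume : Measure E), inner ℝ ψ u =
      ∫ x : E, (u x 0 * fderiv ℝ φ x (EuclideanSpace.single 1 1) -
        u x 1 * fderiv ℝ φ x (EuclideanSpace.single 0 1)) := by
  have hcont : ∀ v : E, Continuous fun x => fderiv ℝ φ x v := fun v =>
    (hφ.continuous_fderiv (by simp)).clm_apply continuous_const
  set ψ : E → E := fun x => fderiv ℝ φ x (EuclideanSpace.single 1 1) • EuclideanSpace.single 0 1 -
    fderiv ℝ φ x (EuclideanSpace.single 0 1) • EuclideanSpace.single 1 1 with hψ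
  have hψm : MemLp ψ 2 (volume : Measure E) := by
    refine MemLp.sub ?_ ?_
    · exact (((hcont _).smul continuous_const).memLp_of_hasCompactSupport
        ((hc.fderiv_apply ℝ _).smul_right))
    · exact (((hcont _).smul continuous_const).memLp_of_hasCompactSupport
        ((hc.fderiv_apply ℝ _).smul_right))
  refine ⟨hψm.toLp ψ, fun u => ?_⟩
  rw [L2.inner_def]
  refine integral_congr_ae ?_
  filter_upwards [hψm.coeFn_toLp] with x hx
  rw [hx, hψ]
  simp [inner_sub_left, inner_smul_left, EuclideanSpace.inner_single_left]
  ring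

/-- `ω ∈ L¹ ∩ L^p` represents the vorticity of `u`, with both norms at most `K`. -/
def IsVorticityBoundedBy (p K : ℝ≥0∞) (u : Lp E 2 (volume : Measure E)) (ω : E → ℝ) : Prop :=
  Integrable ω (volume : Measure E) ∧ MemLp ω p (volume : Measure E) ∧
    eLpNorm ω 1 (volume : Measure E) ≤ K ∧ eLpNorm ω p (volume : Measure E) ≤ K ∧
    IsDistributionalVorticity u ω

theorem MeasureTheory.eLpNorm_midpoint_le {f g : E → ℝ} {p K : ℝ≥0∞} (hp : 1 ≤ p)
    (hf : AEStronglyMeasurable f (volume : Measure E))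
    (hg : AEStronglyMeasurable g (volume : Measure E))
    (hfK : eLpNorm f p (volume : Measure E) ≤ K) (hgK : eLpNorm g p (volume : Measure E) ≤ K) :
    eLpNorm (fun x => (f x + g x) / 2) p (volume : Measure E) ≤ K := by
  have h : (fun x => (f x + g x) / 2) = (2⁻¹ : ℝ) • (f + g) := by
    ext x
    simp
    ring
  rw [h, eLpNorm_const_smul]
  calc ‖(2⁻¹ : ℝ)‖ₑ * eLpNorm (f + g) p volume
      ≤ ‖(2⁻¹ : ℝ)‖ₑ * (K + K) := by
        gcongr
        exact (eLpNorm_add_le hf hg hp).trans (add_le_add hfK hgK)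
    _ = K := by
        have h2 : ‖(2⁻¹ : ℝ)‖ₑ = 2⁻¹ := by
          rw [enorm_inv two_ne_zero]
          simp [enorm_eq_nnnorm]
        rw [h2, ← two_mul, ← mul_assoc, ENNReal.inv_mul_cancel two_ne_zero ofNat_ne_top, one_mul]

theorem IsVorticityBoundedBy.midpoint {p K : ℝ≥0∞} (hp : 1 ≤ p) {u v : Lp E 2 (volume : Measure E)}
    {f g : E → ℝ} (hf : IsVorticityBoundedBy p K u f) (hg : IsVorticityBoundedBy p K v g) :
    IsVorticityBoundedBy p K (midpoint ℝ u v) (fun x => (f x + g x) / 2) := by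
  obtain ⟨hf1, hfp, hf1K, hfpK, hfu⟩ := hf
  obtain ⟨hg1, hgp, hg1K, hgpK, hgv⟩ := hg
  refine ⟨(hf1.add hg1).div_const 2, ?_, eLpNorm_midpoint_le le_rfl hf1.1 hg1.1 hf1K hg1K,
    eLpNorm_midpoint_le hp hf1.1 hg1.1 hfpK hgpK, fun φ hφ hc => ?_⟩
  · have h := (hfp.add hgp).const_mul (2⁻¹ : ℝ)
    refine h.ae_eq (ae_of_all _ fun x => ?_)
    simp
    ring
  · obtain ⟨ψ, hψ⟩ := exists_inner_eq_integral_curl hφ hc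
    obtain ⟨C, hC⟩ := hφ.continuous.bounded_above_of_compact_support hc
    have hfφ := hf1.mul_bdd hφ.continuous.aestronglyMeasurable (ae_of_all _ hC)
    have hgφ := hg1.mul_bdd hφ.continuous.aestronglyMeasurable (ae_of_all _ hC)
    rw [← hψ, midpoint_eq_smul_add, inner_smul_right, inner_add_right, hψ u, hψ v,
      ← hfu φ hφ hc, ← hgv φ hφ hc, ← integral_add hfφ hgφ, ← integral_const_mul]
    refine integral_congr_ae (ae_of_all _ fun x => ?_)
    simp
    ring

theorem isClosed_setOf_isVorticityBoundedBy {p K : ℝ≥0∞} (hp : 1 < p) (hK : K ≠ ∞) :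
    IsClosed {u : Lp E 2 (volume : Measure E) | ∃ ω, IsVorticityBoundedBy p K u ω} := by
  refine isClosed_of_closure_subset fun u hu => ?_
  set S : ℕ → Set (E → ℝ) := fun n =>
    {ω | ∃ v ∈ Metric.ball u (1 / ((n : ℝ) + 1)), IsVorticityBoundedBy p K v ω}
  have hanti : Antitone S := by
    rintro m n hmn ω ⟨v, hv, hω⟩
    exact ⟨v, Metric.ball_subset_ball (by gcongr) hv, hω⟩
  have hne : ∀ n, (S n).Nonempty := fun n => by
    obtain ⟨v, ⟨ω, hω⟩, hv⟩ := Metric.mem_closure_iff.1 hu (1 / ((n : ℝ) + 1)) (by positivity)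
    exact ⟨ω, v, by rwa [Metric.mem_ball, dist_comm], hω⟩
  obtain ⟨w, g, hwS, hwg⟩ := exists_selection_tendsto_ae (μ := (volume : Measure E)) hanti hne
    (fun n f ⟨v, _, hf⟩ => hf.1)
    (fun n f ⟨v, hv, hf⟩ g ⟨v', hv', hg⟩ =>
      ⟨midpoint ℝ v v', (convex_ball u _).midpoint_mem hv hv', hf.midpoint hp.le hg⟩)
    hK (fun n f ⟨v, _, hf⟩ => hf.2.2.1)
  choose v hv hw using hwS
  have hwm : ∀ n, AEStronglyMeasurable (w n) (volume : Measure E) := fun n => (hw n).1.1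
  have hgm : AEStronglyMeasurable g (volume : Measure E) :=
    aestronglyMeasurable_of_tendsto_ae atTop hwm hwg
  have hg1 : eLpNorm g 1 (volume : Measure E) ≤ K :=
    Lp.eLpNorm_le_of_ae_tendsto (Eventually.of_forall fun n => (hw n).2.2.1) hwm hwg
  have hgp : eLpNorm g p (volume : Measure E) ≤ K :=
    Lp.eLpNorm_le_of_ae_tendsto (Eventually.of_forall fun n => (hw n).2.2.2.1) hwm hwg
  have hgi : Integrable g (volume : Measure E) :=
    memLp_one_iff_integrable.1 ⟨hgm, hg1.trans_lt hK.lt_top⟩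
  have hvu : Tendsto v atTop (𝓝 u) :=
    tendsto_iff_dist_tendsto_zero.2 (squeeze_zero (fun _ => dist_nonneg)
      (fun n => (Metric.mem_ball.1 (hv n)).le) tendsto_one_div_add_atTop_nhds_zero_nat)
  refine ⟨g, hgi, ⟨hgm, hgp.trans_lt hK.lt_top⟩, hg1, hgp, fun φ hφ hc => ?_⟩
  obtain ⟨ψ, hψ⟩ := exists_inner_eq_integral_curl hφ hc
  obtain ⟨C, hC⟩ := hφ.continuous.bounded_above_of_compact_support hc
  have hleft := tendsto_integral_mul_of_tendsto_ae hp hK (fun n => (hw n).1) hgi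
    (fun n => (hw n).2.2.2.1) hwg hφ.continuous.aestronglyMeasurable hC hc.measure_lt_top.ne
    (fun x hx => image_eq_zero_of_notMem_tsupport hx)
  have hright : Tendsto (fun n => inner ℝ ψ (v n)) atTop (𝓝 (inner ℝ ψ u)) :=
    tendsto_const_nhds.inner hvu
  rw [← hψ]
  refine tendsto_nhds_unique hleft (hright.congr fun n => ?_)
  rw [hψ, ← (hw n).2.2.2.2 φ hφ hc]

/-- For `1 < p ≤ ∞` and `k > 0`, the set of square-integrable vector fields on
`ℝ²` whose distributional vorticity is represented by some
`ω ∈ L¹(ℝ²) ∩ L^p(ℝ²)` with both norms bounded by `k` is closed in `L²`;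
consequently the set of vector fields with vorticity in `L¹ ∩ L^p` is Borel. -/
theorem vorticity_class_Lp_closed_and_borel (p : ℝ≥0∞) (hp : 1 < p) (k : ℝ) (hk : 0 < k) :
    IsClosed {u : Lp E 2 (volume : Measure E) |
      ∃ ω : E → ℝ, Integrable ω (volume : Measure E) ∧ MemLp ω p (volume : Measure E) ∧
        eLpNorm ω 1 (volume : Measure E) ≤ ENNReal.ofReal k ∧
        eLpNorm ω p (volume : Measure E) ≤ ENNReal.ofReal k ∧
        IsDistributionalVorticity u ω} ∧
    MeasurableSet[borel (Lp E 2 (volume : Measure E))]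
      {u : Lp E 2 (volume : Measure E) |
        ∃ ω : E → ℝ, Integrable ω (volume : Measure E) ∧
          MemLp ω p (volume : Measure E) ∧ IsDistributionalVorticity u ω} := by
  refine ⟨isClosed_setOf_isVorticityBoundedBy hp ofReal_ne_top, ?_⟩
  have hunion : {u : Lp E 2 (volume : Measure E) |
        ∃ ω : E → ℝ, Integrable ω (volume : Measure E) ∧
          MemLp ω p (volume : Measure E) ∧ IsDistributionalVorticity u ω} =
      ⋃ n : ℕ, {u : Lp E 2 (volume : Measure E) | ∃ ω, IsVorticityBoundedBy p n u ω} := by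
    ext u
    simp only [Set.mem_ofPred_eq, Set.mem_iUnion]
    constructor
    · rintro ⟨ω, h1, hωp, hu⟩
      obtain ⟨n, hn⟩ := ENNReal.exists_nat_gt
        (max_lt (memLp_one_iff_integrable.2 h1).2 hωp.2).ne
      exact ⟨n, ω, h1, hωp, (le_max_left _ _).trans hn.le, (le_max_right _ _).trans hn.le, hu⟩
    · rintro ⟨n, ω, h1, hωp, -, -, hu⟩
      exact ⟨ω, h1, hωp, hu⟩
  rw [hunion]
  let _ : MeasurableSpace (Lp E 2 (volume : Measure E)) := borel _
  have : BorelSpace (Lp E 2 (volume : Measure E)) := ⟨rfl⟩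
  exact MeasurableSet.iUnion fun n =>
    (isClosed_setOf_isVorticityBoundedBy hp (natCast_ne_top n)).measurableSet
end

section
/- Fix p with 1 ≤ p ≤ ∞. Define Φ_p : L²(ℝ²;ℝ²) → [0,∞] by setting Φ_p(u) equal to the L^p(ℝ²)-norm of ω whenever there exists ω ∈ L¹(ℝ²) ∩ L^∞(ℝ²) representing the distributional vorticity of u, and Φ_p(u) = ∞ otherwise. Then Φ_p is Borel measurable with respect to the norm topology on L²(ℝ²;ℝ²). -/
open MeasureTheory ENNReal
open scoped Classical

local notation "E" => EuclideanSpace ℝ (Fin 2)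

/-- `Φ_p u`: the `L^p` norm of the vorticity of `u`, whenever the vorticity of
`u` is represented by a function `ω ∈ L¹(ℝ²) ∩ L^∞(ℝ²)`, and `∞` otherwise.
The representative is unique up to null sets, so the value does not depend on
the choice. -/
noncomputable def vorticityLpNorm (p : ℝ≥0∞) (u : Lp E 2 (volume : Measure E)) : ℝ≥0∞ :=
  if h : ∃ ω : E → ℝ, Integrable ω (volume : Measure E) ∧
      MemLp ω ∞ (volume : Measure E) ∧ IsDistributionalVorticity u ω
  then eLpNorm h.choose p (volume : Measure E)
  else ⊤

/-- On `L^q`, the `L^p` seminorm is lower semicontinuous, for every exponent `p`. -/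
theorem lowerSemicontinuous_eLpNorm_coeFn {α F : Type*} [MeasurableSpace α] {μ : Measure α}
    [NormedAddCommGroup F] {q : ℝ≥0∞} [Fact (1 ≤ q)] (p : ℝ≥0∞) :
    LowerSemicontinuous fun f : Lp F q μ => eLpNorm f p μ := by
  rw [lowerSemicontinuous_iff_isClosed_preimage]
  intro c
  refine IsSeqClosed.isClosed fun f g hf hfg => ?_
  obtain ⟨ns, -, hns⟩ := (tendstoInMeasure_of_tendsto_Lp hfg).exists_seq_tendsto_ae
  exact Lp.eLpNorm_le_of_ae_tendsto (.of_forall fun n => hf (ns n))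
    (fun n => Lp.aestronglyMeasurable _) hns

/-- Pairing against a fixed square-integrable function is continuous on `L²`. -/
theorem continuous_integral_inner_of_memLp {α F : Type*} [MeasurableSpace α] {μ : Measure α}
    [NormedAddCommGroup F] [InnerProductSpace ℝ F] {g : α → F} (hg : MemLp g 2 μ) :
    Continuous fun f : Lp F 2 μ => ∫ x, inner ℝ (f x) (g x) ∂μ := by
  have h : Continuous fun f : Lp F 2 μ => inner ℝ f (hg.toLp g) := by fun_prop
  refine h.congr fun f => ?_
  rw [L2.inner_def]
  refine integral_congr_ae ?_
  filter_upwards [hg.coeFn_toLp] with x hx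
  rw [hx]

theorem MeasureTheory.Integrable.memLp_two_of_memLp_top {α : Type*} [MeasurableSpace α]
    {μ : Measure α} {f : α → ℝ} (hf : Integrable f μ) (hf' : MemLp f ∞ μ) : MemLp f 2 μ := by
  rw [memLp_two_iff_integrable_sq hf.aestronglyMeasurable]
  exact (hf.mul_of_top_left hf').congr (.of_forall fun x => (sq (f x)).symm)

theorem IsDistributionalVorticity.congr_ae {u : Lp E 2 (volume : Measure E)} {ω ω' : E → ℝ}
    (h : IsDistributionalVorticity u ω) (hω : ω =ᵐ[volume] ω') :
    IsDistributionalVorticity u ω' := by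
  intro φ hφ hφc
  rw [← h φ hφ hφc]
  refine integral_congr_ae ?_
  filter_upwards [hω] with x hx
  rw [hx]

theorem IsDistributionalVorticity.ae_eq {u : Lp E 2 (volume : Measure E)} {ω ω' : E → ℝ}
    (h : IsDistributionalVorticity u ω) (h' : IsDistributionalVorticity u ω')
    (hω : LocallyIntegrable ω) (hω' : LocallyIntegrable ω') : ω =ᵐ[volume] ω' := by
  refine ae_eq_of_integral_contDiff_smul_eq hω hω' fun φ hφ hφc => ?_
  simp only [smul_eq_mul, mul_comm (φ _)]
  rw [h φ hφ hφc, h' φ hφ hφc]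

/-- The graph of the distributional curl is closed in `L² × L²`. -/
theorem isClosed_setOf_isDistributionalVorticity :
    IsClosed {z : Lp E 2 (volume : Measure E) × Lp ℝ 2 (volume : Measure E) |
      IsDistributionalVorticity z.1 z.2} := by
  simp only [IsDistributionalVorticity, Set.ofPred_forall]
  refine isClosed_iInter fun φ => isClosed_iInter fun hφ => isClosed_iInter fun hφc => ?_
  have hd : ∀ v : E, Continuous fun x => fderiv ℝ φ x v := fun v =>
    (hφ.continuous_fderiv (by simp)).clm_apply continuous_const
  have hm : MemLp (fun x => !₂[fderiv ℝ φ x (EuclideanSpace.single 1 1),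
      -fderiv ℝ φ x (EuclideanSpace.single 0 1)]) 2 (volume : Measure E) := by
    refine Continuous.memLp_of_hasCompactSupport ?_ ?_
    · refine (PiLp.continuous_toLp 2 _).comp (continuous_pi fun i => ?_)
      fin_cases i
      · exact hd _
      · exact (hd _).neg
    · refine (hφc.fderiv ℝ).mono fun x hx h0 => hx ?_
      ext i
      fin_cases i <;> simp [h0]
  refine isClosed_eq ?_ ?_
  · refine ((continuous_integral_inner_of_memLp
      (hφ.continuous.memLp_of_hasCompactSupport hφc)).comp continuous_snd).congr fun z => ?_
    simp [mul_comm]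
  · refine ((continuous_integral_inner_of_memLp hm).comp continuous_fst).congr fun z => ?_
    simp [PiLp.inner_apply, Fin.sum_univ_two, mul_comm, sub_eq_add_neg]

/-- Any representative of the vorticity in `L¹ ∩ L^∞` computes `vorticityLpNorm`. -/
theorem IsDistributionalVorticity.vorticityLpNorm_eq {u : Lp E 2 (volume : Measure E)}
    {ω : E → ℝ} (h : IsDistributionalVorticity u ω) (hω : Integrable ω) (hω' : MemLp ω ∞)
    (p : ℝ≥0∞) : vorticityLpNorm p u = eLpNorm ω p volume := by
  have hex : ∃ ω : E → ℝ, Integrable ω (volume : Measure E) ∧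
      MemLp ω ∞ (volume : Measure E) ∧ IsDistributionalVorticity u ω := ⟨ω, hω, hω', h⟩
  rw [vorticityLpNorm, dif_pos hex]
  exact eLpNorm_congr_ae (hex.choose_spec.2.2.ae_eq h
    hex.choose_spec.1.locallyIntegrable hω.locallyIntegrable)

/-- Finite sublevel sets of `vorticityLpNorm` are projections of subsets of the graph of the
curl in `L² × L²`. -/
theorem vorticityLpNorm_preimage_Iic (p : ℝ≥0∞) {c : ℝ≥0∞} (hc : c ≠ ∞) :
    vorticityLpNorm p ⁻¹' Set.Iic c = Prod.fst ''
      {z : Lp E 2 (volume : Measure E) × Lp ℝ 2 (volume : Measure E) |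
        IsDistributionalVorticity z.1 z.2 ∧ eLpNorm z.2 1 volume < ∞ ∧
          eLpNorm z.2 ∞ volume < ∞ ∧ eLpNorm z.2 p volume ≤ c} := by
  ext u
  constructor
  · intro hu
    by_cases hex : ∃ ω : E → ℝ, Integrable ω (volume : Measure E) ∧
      MemLp ω ∞ (volume : Measure E) ∧ IsDistributionalVorticity u ω
    · obtain ⟨ω, hω, hω', h⟩ := hex
      have h2 := hω.memLp_two_of_memLp_top hω'
      rw [Set.mem_preimage, Set.mem_Iic, h.vorticityLpNorm_eq hω hω'] at hu
      refine ⟨(u, h2.toLp ω), ⟨h.congr_ae h2.coeFn_toLp.symm, ?_⟩, rfl⟩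
      simp only [eLpNorm_congr_ae h2.coeFn_toLp]
      exact ⟨(memLp_one_iff_integrable.2 hω).2, hω'.2, hu⟩
    · rw [Set.mem_preimage, vorticityLpNorm, dif_neg hex, Set.mem_Iic, top_le_iff] at hu
      exact absurd hu hc
  · rintro ⟨⟨u, ω⟩, ⟨h, h1, htop, hle⟩, rfl⟩
    rw [Set.mem_preimage, Set.mem_Iic, h.vorticityLpNorm_eq
      (memLp_one_iff_integrable.1 ⟨Lp.aestronglyMeasurable ω, h1⟩)
      ⟨Lp.aestronglyMeasurable ω, htop⟩]
    exact hle

/-- For every `1 ≤ p ≤ ∞`, the map sending a square-integrable vector field on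
`ℝ²` to the `L^p` norm of its vorticity (extended by `∞` off the Yudovich
class) is Borel measurable on `L²(ℝ²;ℝ²)`. -/
theorem vorticityLpNorm_measurable (p : ℝ≥0∞) (hp : 1 ≤ p) :
    Measurable[borel (Lp E 2 (volume : Measure E))] (vorticityLpNorm p) := by
  borelize ↥(Lp E 2 (volume : Measure E))
  borelize ↥(Lp ℝ 2 (volume : Measure E))
  have : Fact ((2 : ℝ≥0∞) ≠ ∞) := ⟨by simp⟩
  have : SecondCountableTopology (Lp ℝ 2 (volume : Measure E)) := inferInstance
  have : SecondCountableTopology (Lp E 2 (volume : Measure E)) := inferInstance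
  refine measurable_of_Iic fun c => ?_
  obtain rfl | hc := eq_or_ne c ∞
  · simp
  rw [vorticityLpNorm_preimage_Iic p hc]
  have hmeas (q : ℝ≥0∞) : Measurable fun z : Lp E 2 (volume : Measure E) ×
      Lp ℝ 2 (volume : Measure E) => eLpNorm z.2 q volume :=
    (lowerSemicontinuous_eLpNorm_coeFn q).measurable.comp measurable_snd
  refine MeasurableSet.image_of_continuousOn_injOn ?_ continuous_fst.continuousOn ?_
  · exact isClosed_setOf_isDistributionalVorticity.measurableSet.inter
      ((measurableSet_lt (hmeas 1) measurable_const).inter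
        ((measurableSet_lt (hmeas ∞) measurable_const).inter
          (measurableSet_le (hmeas p) measurable_const)))
  · rintro ⟨u, ω⟩ ⟨h, -⟩ ⟨u', ω'⟩ ⟨h', -⟩ (rfl : u = u')
    have hloc (f : Lp ℝ 2 (volume : Measure E)) : LocallyIntegrable f :=
      (Lp.memLp f).locallyIntegrable one_le_two
    exact congrArg (Prod.mk u) (Lp.ext (h.ae_eq h' (hloc ω) (hloc ω')))
end
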